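/- For all ε > 0 and Δ > 0, V* = inf_{μ ∈ ⋃_{i≥3} 𝒫_i^{(d)}} V(μ), where 𝒫_i^{(d)} is the set of μ ∈ 𝒫_i^{(c)} whose density sequence satisfies, for some integer k with 1 ≤ k ≤ i−2: a_j = a₀ for all 0 ≤ j < k and a_j = a_{i−1} for all k < j ≤ i−1. (Lemma 9: the optimizing densities are two-valued staircase-shaped on each period.) -/

import Mathlib

open MeasureTheory Real Filter
open scoped ENNReal Topology

noncomputable section

/-- The ℓ¹ norm on ℝ². -/
def l1 (x : ℝ × ℝ) : ℝ := |x.1| + |x.2|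

/-- The ε-differential-privacy constraint on a measure on ℝ² with sensitivity Δ. -/
def DPC (ε Δ : ℝ) (μ : Measure (ℝ × ℝ)) : Prop :=
  ∀ S : Set (ℝ × ℝ), MeasurableSet S → ∀ t : ℝ × ℝ, l1 t ≤ Δ →
    μ S ≤ ENNReal.ofReal (Real.exp ε) * μ ((· + t) '' S)

/-- Expected ℓ¹ cost of a noise distribution. -/
def cost (μ : Measure (ℝ × ℝ)) : ℝ≥0∞ := ∫⁻ x, ENNReal.ofReal (l1 x) ∂μ

/-- The index k of the ℓ¹ layer A_i(k) = {x : kΔ/i ≤ ‖x‖₁ < (k+1)Δ/i} containing x. -/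
def layerIdx (Δ : ℝ) (i : ℕ) (x : ℝ × ℝ) : ℕ := ⌊l1 x * i / Δ⌋₊

/-- μ has a density w.r.t. Lebesgue measure which is constant on each ℓ¹ layer
A_i(k), with constant value a_k on A_i(k); (a_k) is the density sequence of μ. -/
def HasDensitySeq (Δ : ℝ) (i : ℕ) (μ : Measure (ℝ × ℝ)) (a : ℕ → ℝ≥0∞) : Prop :=
  μ = MeasureTheory.volume.withDensity (fun x => a (layerIdx Δ i x))

/-- Membership in 𝒫: probability measures satisfying the ε-DP constraint. -/
def MemP (ε Δ : ℝ) (μ : Measure (ℝ × ℝ)) : Prop :=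
  IsProbabilityMeasure μ ∧ DPC ε Δ μ

/-- Membership in 𝒫_{i,sym}: members of 𝒫 with layer-constant density. -/
def MemPsym (ε Δ : ℝ) (i : ℕ) (μ : Measure (ℝ × ℝ)) : Prop :=
  MemP ε Δ μ ∧ ∃ a : ℕ → ℝ≥0∞, HasDensitySeq Δ i μ a

/-- Membership in 𝒫_i^{(a)}: layer-constant density with nonincreasing density sequence. -/
def MemPa (ε Δ : ℝ) (i : ℕ) (μ : Measure (ℝ × ℝ)) : Prop :=
  MemP ε Δ μ ∧ ∃ a : ℕ → ℝ≥0∞, HasDensitySeq Δ i μ a ∧ Antitone a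

/-- Membership in 𝒫_i^{(b)}: additionally the density sequence decays geometrically,
a_k = e^ε · a_{k+i} for all k. -/
def MemPb (ε Δ : ℝ) (i : ℕ) (μ : Measure (ℝ × ℝ)) : Prop :=
  MemP ε Δ μ ∧ ∃ a : ℕ → ℝ≥0∞, HasDensitySeq Δ i μ a ∧ Antitone a ∧
    ∀ k : ℕ, a k = ENNReal.ofReal (Real.exp ε) * a (k + i)

/-- Membership in 𝒫_i^{(c)}: additionally a₀ = e^ε · a_{i−1} and
a₀ = a₁ = ⋯ = a_k for some 0 ≤ k ≤ i−2. -/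
def MemPc (ε Δ : ℝ) (i : ℕ) (μ : Measure (ℝ × ℝ)) : Prop :=
  MemP ε Δ μ ∧ ∃ a : ℕ → ℝ≥0∞, HasDensitySeq Δ i μ a ∧ Antitone a ∧
    (∀ k : ℕ, a k = ENNReal.ofReal (Real.exp ε) * a (k + i)) ∧
    a 0 = ENNReal.ofReal (Real.exp ε) * a (i - 1) ∧
    ∃ k : ℕ, k ≤ i - 2 ∧ ∀ j : ℕ, j ≤ k → a j = a 0

/-- Membership in 𝒫_i^{(d)}: members of 𝒫_i^{(c)} whose density sequence takes only
the two values a₀ and a_{i−1} on each period: for some 1 ≤ k ≤ i−2, a_j = a₀ for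
0 ≤ j < k and a_j = a_{i−1} for k < j ≤ i−1. -/
def MemPd (ε Δ : ℝ) (i : ℕ) (μ : Measure (ℝ × ℝ)) : Prop :=
  MemP ε Δ μ ∧ ∃ a : ℕ → ℝ≥0∞, HasDensitySeq Δ i μ a ∧ Antitone a ∧
    (∀ k : ℕ, a k = ENNReal.ofReal (Real.exp ε) * a (k + i)) ∧
    a 0 = ENNReal.ofReal (Real.exp ε) * a (i - 1) ∧
    (∃ k : ℕ, k ≤ i - 2 ∧ ∀ j : ℕ, j ≤ k → a j = a 0) ∧
    ∃ k : ℕ, 1 ≤ k ∧ k ≤ i - 2 ∧ (∀ j : ℕ, j < k → a j = a 0) ∧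
      ∀ j : ℕ, k < j → j ≤ i - 1 → a j = a (i - 1)

/-!
Let `V` lie below the cost of every staircase measure, and put `v = V / Δ` and `b = e^{-ε}`.
Averaging a private measure over small balls changes its cost by an arbitrarily small amount and
produces a density `f` with `f x ≤ e^ε f (x + t)` for `‖t‖₁ ≤ Δ`. In polar coordinates for the
`ℓ¹` norm it is then enough to prove `v ∫ r g(r) dr ≤ ∫ r² g(r) dr` for the restrictions `g` of
`f` to rays, which satisfy `b g(r) ≤ g(s)` whenever `|r - s| ≤ 1`.

Fold both integrals modulo `1`. On the residue class `x + ℕ`, replacing `g` by the geometric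
sequence through its value at a point near `v` lowers mass beyond `v` and raises it before `v`.
What remains is `∫ G(x) H(x) dx` over `[0, 1)`, where `H(x) = ∑ bᵏ ((x + k)² - v (x + k))` is
convex and nonnegative beyond `v`, hence has sign pattern `+, -, +` with changes at some `α ≤ β`.
Taking all the points near `v` from a single unit window `[N + α, N + α + 1]`, on which `g` varies
by a factor of at most `1 / b`, gives `G ≥ C` on `[0, α)`, `G ≤ C` on `[α, β)` and `G ≥ b C` on
`[β, 1)`. So `∫ G H` is at least `C` times its value for the staircase profile switching from `1`
to `b` at `β`. The profiles with rational switching point `k / i` are those of the measures in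
`𝒫_i^{(d)}`, for which the inequality is the choice of `V`; the others follow by continuity in the
switching point.
-/

section Folding

lemma lintegral_Ici_eq_lintegral_Ico_tsum {u : ℝ → ℝ≥0∞} (hu : Measurable u) :
    ∫⁻ r in Set.Ici (0 : ℝ), u r = ∫⁻ x in Set.Ico (0 : ℝ) 1, ∑' k : ℕ, u (x + k) := by
  have hcover : Set.Ici (0 : ℝ) = ⋃ k : ℕ, Set.Ico (k : ℝ) (k + 1) := by
    ext r
    simp only [Set.mem_Ici, Set.mem_iUnion, Set.mem_Ico]
    exact ⟨fun h => ⟨⌊r⌋₊, Nat.floor_le h, Nat.lt_floor_add_one r⟩,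
      fun ⟨k, hk, _⟩ => k.cast_nonneg.trans hk⟩
  have hdisj : Pairwise (Function.onFun Disjoint fun k : ℕ => Set.Ico (k : ℝ) (k + 1)) := by
    simpa using (Nat.mono_cast (α := ℝ)).pairwise_disjoint_on_Ico_succ
  rw [hcover, lintegral_iUnion (fun k => measurableSet_Ico) hdisj,
    lintegral_tsum (f := fun (k : ℕ) x => u (x + k)) fun k => by fun_prop]
  refine tsum_congr fun k => ?_
  rw [← (measurePreserving_add_right volume (k : ℝ)).setLIntegral_comp_preimage
    measurableSet_Ico hu]
  simp

end Folding

section GeometricMoments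

variable {n : ℕ} {b v x : ℝ}

/-- The `n`-th geometric moment `∑ bᵏ (x + k)ⁿ` of the residue class `x + ℕ`: the weight that
folding `∫ rⁿ g(r) dr` modulo `1` puts at `x` when `g` decays by the factor `b` per unit. -/
def geomMoment (n : ℕ) (b x : ℝ) : ℝ := ∑' k : ℕ, b ^ k * (x + k) ^ n

lemma geom_mul_add_pow_eq_sum (n : ℕ) (b x : ℝ) (k : ℕ) :
    b ^ k * (x + k) ^ n =
      ∑ m ∈ Finset.range (n + 1), x ^ m * n.choose m * ((k : ℝ) ^ (n - m) * b ^ k) := by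
  rw [add_pow, Finset.mul_sum]
  exact Finset.sum_congr rfl fun m _ => by ring

lemma summable_pow_mul_geom (hb : |b| < 1) (n : ℕ) : Summable fun k : ℕ => (k : ℝ) ^ n * b ^ k :=
  summable_pow_mul_geometric_of_norm_lt_one n hb

lemma hasSum_geomMoment (hb : |b| < 1) (n : ℕ) (x : ℝ) :
    HasSum (fun k : ℕ => b ^ k * (x + k) ^ n) (geomMoment n b x) := by
  refine Summable.hasSum ?_
  simp only [geom_mul_add_pow_eq_sum]
  exact summable_sum fun m _ => (summable_pow_mul_geom hb (n - m)).mul_left _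

lemma geomMoment_eq_sum (hb : |b| < 1) (n : ℕ) (x : ℝ) :
    geomMoment n b x =
      ∑ m ∈ Finset.range (n + 1), x ^ m * n.choose m * geomMoment (n - m) b 0 := by
  simp only [geomMoment, geom_mul_add_pow_eq_sum n b x, zero_add]
  rw [Summable.tsum_finsetSum fun m _ => (summable_pow_mul_geom hb (n - m)).mul_left _]
  exact Finset.sum_congr rfl fun m _ => by rw [tsum_mul_left]; simp only [mul_comm]

lemma continuous_geomMoment (hb : |b| < 1) (n : ℕ) : Continuous (geomMoment n b) := by
  rw [funext (geomMoment_eq_sum hb n)]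
  fun_prop

lemma geomMoment_nonneg (hb : 0 ≤ b) (n : ℕ) (hx : 0 ≤ x) : 0 ≤ geomMoment n b x :=
  tsum_nonneg fun k => by positivity

lemma geomMoment_pos (hb₀ : 0 ≤ b) (hb₁ : b < 1) (n : ℕ) (hx : 0 < x) : 0 < geomMoment n b x :=
  (hasSum_geomMoment (abs_lt.2 ⟨by linarith, hb₁⟩) n x).summable.tsum_pos
    (fun k => by positivity) 0 (by simpa using pow_pos hx n)

lemma ofReal_mul_geomMoment (hb₀ : 0 ≤ b) (hb₁ : b < 1) (n : ℕ) (hx : 0 ≤ x) {c : ℝ}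
    (hc : 0 ≤ c) :
    ENNReal.ofReal (c * geomMoment n b x) =
      ∑' k : ℕ, ENNReal.ofReal (c * (b ^ k * (x + k) ^ n)) := by
  have hsum := (hasSum_geomMoment (abs_lt.2 ⟨by linarith, hb₁⟩) n x).mul_left c
  rw [← hsum.tsum_eq, ENNReal.ofReal_tsum_of_nonneg (fun k => by positivity) hsum.summable]

lemma mul_geomMoment_le_geomMoment_succ (hb₀ : 0 ≤ b) (hb₁ : b < 1) (n : ℕ) (hx : 0 ≤ x)
    (hvx : v ≤ x) : v * geomMoment n b x ≤ geomMoment (n + 1) b x := by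
  have hb : |b| < 1 := abs_lt.2 ⟨by linarith, hb₁⟩
  refine hasSum_le (fun k => ?_) ((hasSum_geomMoment hb n x).mul_left v)
    (hasSum_geomMoment hb (n + 1) x)
  have hvk : v ≤ x + k := hvx.trans (le_add_of_nonneg_right k.cast_nonneg)
  calc v * (b ^ k * (x + k) ^ n) ≤ (x + k) * (b ^ k * (x + k) ^ n) := by gcongr
    _ = b ^ k * (x + k) ^ (n + 1) := by ring

lemma convexOn_geomMoment_two_sub (hb₀ : 0 ≤ b) (hb₁ : b < 1) (v : ℝ) :
    ConvexOn ℝ Set.univ fun x => geomMoment 2 b x - v * geomMoment 1 b x := by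
  have hb : |b| < 1 := abs_lt.2 ⟨by linarith, hb₁⟩
  have hzero : 0 ≤ geomMoment 0 b 0 := geomMoment_nonneg hb₀ 0 le_rfl
  have hquad : (fun x => geomMoment 2 b x - v * geomMoment 1 b x) = fun x =>
      geomMoment 0 b 0 • x ^ 2 +
        ((2 * geomMoment 1 b 0 - v * geomMoment 0 b 0) * x +
          (geomMoment 2 b 0 - v * geomMoment 1 b 0)) := by
    funext x
    rw [geomMoment_eq_sum hb 2 x, geomMoment_eq_sum hb 1 x]
    simp [Finset.sum_range_succ]
    ring
  rw [hquad]
  refine (even_two.convexOn_pow.smul hzero).add ⟨convex_univ, fun x _ y _ s t _ _ hst => ?_⟩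
  simp only [smul_eq_mul]
  linear_combination (geomMoment 2 b 0 - v * geomMoment 1 b 0) * hst.symm

end GeometricMoments

lemma exists_sign_pattern_of_convexOn {f : ℝ → ℝ} {p q v : ℝ} (hpq : p ≤ q) (hpv : p ≤ v)
    (hconv : ConvexOn ℝ (Set.Icc p q) f) (hcont : Continuous f) (hfv : ∀ x, v ≤ x → 0 ≤ f x) :
    ∃ α β, p ≤ α ∧ α ≤ β ∧ β ≤ q ∧ α ≤ v ∧ (∀ x ∈ Set.Ico p α, 0 ≤ f x) ∧
      (∀ x ∈ Set.Ico α β, f x ≤ 0) ∧ ∀ x ∈ Set.Ico β q, 0 ≤ f x := by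
  set s := {x ∈ Set.Icc p q | f x < 0}
  have hpos : ∀ x ∈ Set.Icc p q, x ∉ s → 0 ≤ f x := fun x hx hxs =>
    not_lt.1 fun hlt => hxs ⟨hx, hlt⟩
  rcases s.eq_empty_or_nonempty with hs | hs
  · refine ⟨p, p, le_rfl, le_rfl, hpq, hpv, by simp, by simp, fun x hx => ?_⟩
    exact hpos x (Set.Ico_subset_Icc_self hx) (by simp [hs])
  have hbelow : BddBelow s := ⟨p, fun x hx => hx.1.1⟩
  have habove : BddAbove s := ⟨q, fun x hx => hx.1.2⟩
  have hneg : ∀ x ∈ closure s, f x ≤ 0 := fun x hx =>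
    closure_minimal (fun y hy => hy.2.le) (isClosed_le hcont continuous_const) hx
  have hord : (closure s).OrdConnected := (hconv.convex_lt 0).closure.ordConnected
  obtain ⟨z, hz⟩ := hs
  have hzv : z < v := not_le.1 fun h => (hfv z h).not_gt hz.2
  have hps : p ≤ sInf s := le_csInf ⟨z, hz⟩ fun x hx => hx.1.1
  have hsq : sSup s ≤ q := csSup_le ⟨z, hz⟩ fun x hx => hx.1.2
  have hle_z : sInf s ≤ z := csInf_le hbelow hz
  have hz_le : z ≤ sSup s := le_csSup habove hz
  refine ⟨sInf s, sSup s, hps, hle_z.trans hz_le, hsq, hle_z.trans hzv.le,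
    fun x hx => ?_, fun x hx => ?_, fun x hx => ?_⟩
  · exact hpos x ⟨hx.1, (hx.2.le.trans hle_z).trans hz.1.2⟩ fun hxs =>
      (csInf_le hbelow hxs).not_gt hx.2
  · exact hneg x (hord.out (csInf_mem_closure ⟨z, hz⟩ hbelow) (csSup_mem_closure ⟨z, hz⟩ habove)
      (Set.Ico_subset_Icc_self hx))
  · have hright : ∀ y ∈ Set.Ioo x q, 0 ≤ f y := fun y hy =>
      hpos y ⟨(hz.1.1.trans hz_le).trans (hx.1.trans hy.1.le), hy.2.le⟩ fun hys =>
        (le_csSup habove hys).not_gt (hx.1.trans_lt hy.1)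
    refine closure_minimal hright (isClosed_le continuous_const hcont) ?_
    rw [closure_Ioo hx.2.ne]
    exact Set.left_mem_Icc.2 hx.2.le

section RayInequality

variable {b v x : ℝ} {g : ℝ → ℝ}

/-- The two-valued profile on the period `[0, 1)` of a staircase density: `1` before the switching
point `γ` and `b` after it. -/
def step (b γ x : ℝ) : ℝ := if x < γ then 1 else b

lemma step_nonneg (hb : 0 ≤ b) (γ x : ℝ) : 0 ≤ step b γ x := by
  unfold step
  split_ifs <;> positivity

lemma measurable_step (b γ : ℝ) : Measurable (step b γ) :=
  Measurable.ite measurableSet_Iio measurable_const measurable_const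

/-- The differential-privacy constraint along a ray, in units where the sensitivity is `1`;
`b` stands for `e^{-ε}`. -/
def RayPrivate (b : ℝ) (g : ℝ → ℝ) : Prop := ∀ r s, |r - s| ≤ 1 → b * g r ≤ g s

lemma RayPrivate.pow_mul_le_pow_mul (hb : 0 ≤ b) (hg : RayPrivate b g) (x : ℝ) {m k : ℕ}
    (hmk : m ≤ k) : b ^ k * g (x + m) ≤ b ^ m * g (x + k) := by
  induction k, hmk using Nat.le_induction with
  | base => rfl
  | succ k _ ih =>
    calc b ^ (k + 1) * g (x + m) = b * (b ^ k * g (x + m)) := by ring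
      _ ≤ b * (b ^ m * g (x + k)) := by gcongr
      _ = b ^ m * (b * g (x + k)) := by ring
      _ ≤ b ^ m * g (x + (k + 1 : ℕ)) := by gcongr; exact hg _ _ (by simp)

lemma RayPrivate.exists_window_bound (hb : 0 < b) (hg : RayPrivate b g) (w : ℝ) :
    ∃ c, ∀ r ∈ Set.Icc w (w + 1), b * c ≤ g r ∧ g r ≤ c := by
  have hratio : ∀ r ∈ Set.Icc w (w + 1), ∀ s ∈ Set.Icc w (w + 1), g s ≤ g r / b := by
    rintro r ⟨hwr, hrw⟩ s ⟨hws, hsw⟩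
    rw [le_div_iff₀' hb]
    exact hg s r (abs_le.2 ⟨by linarith, by linarith⟩)
  have hw : w ∈ Set.Icc w (w + 1) := ⟨le_rfl, by linarith⟩
  refine ⟨sSup (g '' Set.Icc w (w + 1)), fun r hr => ⟨?_, ?_⟩⟩
  · rw [← le_div_iff₀' hb]
    exact csSup_le ⟨_, Set.mem_image_of_mem g hw⟩ (Set.forall_mem_image.2 (hratio r hr))
  · exact le_csSup ⟨_, Set.forall_mem_image.2 (hratio w hw)⟩ (Set.mem_image_of_mem g hr)

/-- The geometric sequence through the value of `g` at the pivot `x + m` crosses `g` at the pivot,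
and no point of `x + ℕ` lies strictly between `v` and the pivot. -/
lemma RayPrivate.mul_sub_pivot_nonneg (hb : 0 < b) (hg : RayPrivate b g) {m : ℕ}
    (hm : |x + m - v| ≤ 1) (k : ℕ) :
    0 ≤ (x + k - v) * (g (x + k) - b ^ k * (g (x + m) / b ^ m)) := by
  obtain ⟨hlo, hhi⟩ := abs_le.1 hm
  rw [← mul_div_assoc]
  rcases lt_trichotomy k m with h | rfl | h
  · have hle : (k : ℝ) + 1 ≤ m := mod_cast h
    refine mul_nonneg_of_nonpos_of_nonpos (by linarith) ?_
    rw [sub_nonpos, le_div_iff₀' (pow_pos hb m)]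
    exact hg.pow_mul_le_pow_mul hb.le x h.le
  · simp [mul_div_cancel_left₀, (pow_pos hb k).ne']
  · have hle : (m : ℝ) + 1 ≤ k := mod_cast h
    refine mul_nonneg (by linarith) ?_
    rw [sub_nonneg, div_le_iff₀' (pow_pos hb m)]
    exact hg.pow_mul_le_pow_mul hb.le x h.le

lemma exists_pivot (hb : 0 < b) {α β c h : ℝ} {N : ℕ} (hα₀ : 0 ≤ α) (hα₁ : α ≤ 1)
    (hαβ : α ≤ β) (hc : ∀ r ∈ Set.Icc (N + α) (N + α + 1), b * c ≤ g r ∧ g r ≤ c)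
    (hx : x ∈ Set.Ico 0 1) (hleft : x < α → 0 ≤ h) (hmid : α ≤ x → x < β → h ≤ 0)
    (hright : β ≤ x → 0 ≤ h) :
    ∃ m : ℕ, x + m ∈ Set.Icc (N + α) (N + α + 1) ∧
      0 ≤ (g (x + m) / b ^ m - c / b ^ N * step b β x) * h := by
  have hbN : 0 < b ^ N := pow_pos hb N
  rcases lt_or_ge x α with hxα | hxα
  · have hmem : x + (N + 1 : ℕ) ∈ Set.Icc (N + α) (N + α + 1) := by
      push_cast
      exact ⟨by linarith [hx.1], by linarith⟩
    refine ⟨N + 1, hmem, mul_nonneg ?_ (hleft hxα)⟩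
    rw [step, if_pos (hxα.trans_le hαβ), mul_one, sub_nonneg, ← mul_div_mul_left c _ hb.ne',
      ← pow_succ']
    gcongr
    exact (hc _ hmem).1
  · have hmem : x + N ∈ Set.Icc (N + α) (N + α + 1) := ⟨by linarith, by linarith [hx.2]⟩
    obtain ⟨hlo, hhi⟩ := hc _ hmem
    refine ⟨N, hmem, ?_⟩
    rw [div_mul_eq_mul_div, ← sub_div]
    rcases lt_or_ge x β with hxβ | hxβ
    · refine mul_nonneg_of_nonpos_of_nonpos (div_nonpos_of_nonpos_of_nonneg ?_ hbN.le)
        (hmid hxα hxβ)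
      simpa [step, hxβ] using hhi
    · refine mul_nonneg (div_nonneg ?_ hbN.le) (hright hxβ)
      simpa [step, hxβ.not_gt, mul_comm c] using hlo

lemma RayPrivate.exists_step_comparison (hb₀ : 0 < b) (hb₁ : b < 1) (hv : 0 ≤ v)
    (hg₀ : ∀ r, 0 ≤ g r) (hg : RayPrivate b g) :
    ∃ β ∈ Set.Icc (0 : ℝ) 1, ∃ C, 0 ≤ C ∧ ∀ x ∈ Set.Ico (0 : ℝ) 1, ∃ G, 0 ≤ G ∧
      (∀ k : ℕ, 0 ≤ (x + k - v) * (g (x + k) - b ^ k * G)) ∧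
      0 ≤ (G - C * step b β x) * (geomMoment 2 b x - v * geomMoment 1 b x) := by
  have hb : |b| < 1 := abs_lt.2 ⟨by linarith, hb₁⟩
  obtain ⟨α, β, hα₀, hαβ, hβ₁, hαv, hleft, hmid, hright⟩ :=
    exists_sign_pattern_of_convexOn zero_le_one hv
      ((convexOn_geomMoment_two_sub hb₀.le hb₁ v).subset (Set.subset_univ _) (convex_Icc 0 1))
      ((continuous_geomMoment hb 2).sub (continuous_const.mul (continuous_geomMoment hb 1)))
      fun x hx => sub_nonneg.2 (mul_geomMoment_le_geomMoment_succ hb₀.le hb₁ 1 (hv.trans hx) hx)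
  set N := ⌊v - α⌋₊
  have hNv : N ≤ v - α := Nat.floor_le (sub_nonneg.2 hαv)
  have hvN : v - α < N + 1 := Nat.lt_floor_add_one _
  obtain ⟨c, hc⟩ := hg.exists_window_bound hb₀ (N + α)
  have hc₀ : 0 ≤ c := (hg₀ (N + α)).trans (hc _ ⟨le_rfl, by linarith⟩).2
  refine ⟨β, ⟨hα₀.trans hαβ, hβ₁⟩, c / b ^ N, by positivity, fun x hx => ?_⟩
  obtain ⟨m, ⟨hm₁, hm₂⟩, hmul⟩ := exists_pivot hb₀ hα₀ (hαβ.trans hβ₁) hαβ hc hx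
    (fun h => hleft x ⟨hx.1, h⟩) (fun h₁ h₂ => hmid x ⟨h₁, h₂⟩) (fun h => hright x ⟨h, hx.2⟩)
  exact ⟨g (x + m) / b ^ m, div_nonneg (hg₀ _) (by positivity),
    hg.mul_sub_pivot_nonneg hb₀ (abs_le.2 ⟨by linarith, by linarith⟩), hmul⟩

lemma ofReal_mul_tsum_add_le_of_pivot (hb₀ : 0 ≤ b) (hb₁ : b < 1) (hv : 0 ≤ v) (hx : 0 ≤ x)
    (hg₀ : ∀ r, 0 ≤ g r) {G : ℝ} (hG : 0 ≤ G)
    (hpivot : ∀ k : ℕ, 0 ≤ (x + k - v) * (g (x + k) - b ^ k * G)) :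
    ENNReal.ofReal v * ∑' k : ℕ, ENNReal.ofReal ((x + k) * g (x + k)) +
        ENNReal.ofReal (G * geomMoment 2 b x) ≤
      ∑' k : ℕ, ENNReal.ofReal ((x + k) ^ 2 * g (x + k)) +
        ENNReal.ofReal (G * v * geomMoment 1 b x) := by
  rw [ofReal_mul_geomMoment hb₀ hb₁ 2 hx hG,
    ofReal_mul_geomMoment hb₀ hb₁ 1 hx (mul_nonneg hG hv), ← ENNReal.tsum_mul_left,
    ← ENNReal.tsum_add, ← ENNReal.tsum_add]
  refine ENNReal.tsum_le_tsum fun k => ?_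
  have hgk := hg₀ (x + k)
  rw [← ENNReal.ofReal_mul hv, ← ENNReal.ofReal_add (by positivity) (by positivity),
    ← ENNReal.ofReal_add (by positivity) (by positivity)]
  refine ENNReal.ofReal_le_ofReal ?_
  linear_combination (x + k) * hpivot k

lemma ofReal_mul_tsum_add_le (hb₀ : 0 ≤ b) (hb₁ : b < 1) (hv : 0 ≤ v) (hx : 0 ≤ x)
    (hg₀ : ∀ r, 0 ≤ g r) {G D : ℝ} (hG : 0 ≤ G) (hD : 0 ≤ D)
    (hpivot : ∀ k : ℕ, 0 ≤ (x + k - v) * (g (x + k) - b ^ k * G))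
    (hGD : 0 ≤ (G - D) * (geomMoment 2 b x - v * geomMoment 1 b x)) :
    ENNReal.ofReal v * ∑' k : ℕ, ENNReal.ofReal ((x + k) * g (x + k)) +
        ENNReal.ofReal (D * geomMoment 2 b x) ≤
      ∑' k : ℕ, ENNReal.ofReal ((x + k) ^ 2 * g (x + k)) +
        ENNReal.ofReal (D * v * geomMoment 1 b x) := by
  have hone := geomMoment_nonneg hb₀ 1 hx
  have htwo := geomMoment_nonneg hb₀ 2 hx
  have hexchange : ENNReal.ofReal (G * v * geomMoment 1 b x) + ENNReal.ofReal (D * geomMoment 2 b x)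
      ≤ ENNReal.ofReal (D * v * geomMoment 1 b x) + ENNReal.ofReal (G * geomMoment 2 b x) := by
    rw [← ENNReal.ofReal_add (by positivity) (by positivity),
      ← ENNReal.ofReal_add (by positivity) (by positivity)]
    exact ENNReal.ofReal_le_ofReal (by linear_combination hGD)
  refine (ENNReal.add_le_add_iff_right (ENNReal.ofReal_ne_top (r := G * geomMoment 2 b x))).1 ?_
  rw [add_right_comm]
  refine (add_le_add_left (ofReal_mul_tsum_add_le_of_pivot hb₀ hb₁ hv hx hg₀ hG hpivot) _).trans ?_
  rw [add_assoc, add_assoc]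
  gcongr

end RayInequality

section StepMoments

variable {n : ℕ} {b v γ : ℝ}

/-- The `n`-th moment `∫₀^∞ rⁿ s(r) dr` of the staircase profile `s (x + k) = bᵏ · step b γ x`,
folded modulo `1`. -/
def stepMoment (n : ℕ) (b γ : ℝ) : ℝ :=
  (∫ x in (0 : ℝ)..γ, geomMoment n b x) + b * ∫ x in γ..1, geomMoment n b x

lemma lintegral_Ico_ofReal_geomMoment (hb₀ : 0 ≤ b) (hb₁ : b < 1) (n : ℕ) {p q : ℝ} (hp : 0 ≤ p)
    (hpq : p ≤ q) : ∫⁻ x in Set.Ico p q, ENNReal.ofReal (geomMoment n b x) =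
      ENNReal.ofReal (∫ x in p..q, geomMoment n b x) := by
  have hint : IntervalIntegrable (geomMoment n b) volume p q :=
    (continuous_geomMoment (abs_lt.2 ⟨by linarith, hb₁⟩) n).intervalIntegrable p q
  rw [intervalIntegral.integral_of_le hpq, restrict_Ico_eq_restrict_Ioc,
    ofReal_integral_eq_lintegral_ofReal hint.1]
  exact ae_restrict_of_forall_mem measurableSet_Ioc fun x hx =>
    geomMoment_nonneg hb₀ n (hp.trans hx.1.le)

lemma lintegral_ofReal_step_mul_geomMoment (hb₀ : 0 ≤ b) (hb₁ : b < 1) (n : ℕ)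
    (hγ : γ ∈ Set.Icc 0 1) :
    ∫⁻ x in Set.Ico (0 : ℝ) 1, ENNReal.ofReal (step b γ x * geomMoment n b x) =
      ENNReal.ofReal (stepMoment n b γ) := by
  have hint : ∀ {p q : ℝ}, 0 ≤ p → p ≤ q → 0 ≤ ∫ x in p..q, geomMoment n b x := fun hp hpq =>
    intervalIntegral.integral_nonneg hpq fun x hx => geomMoment_nonneg hb₀ n (hp.trans hx.1)
  rw [← Set.Ico_union_Ico_eq_Ico hγ.1 hγ.2, lintegral_union measurableSet_Ico
      (Set.Ico_disjoint_Ico_same), stepMoment, ENNReal.ofReal_add (hint le_rfl hγ.1)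
      (mul_nonneg hb₀ (hint hγ.1 hγ.2)), ENNReal.ofReal_mul hb₀,
    ← lintegral_Ico_ofReal_geomMoment hb₀ hb₁ n le_rfl hγ.1,
    ← lintegral_Ico_ofReal_geomMoment hb₀ hb₁ n hγ.1 hγ.2,
    ← lintegral_const_mul' _ _ ENNReal.ofReal_ne_top]
  congr 1
  · refine setLIntegral_congr_fun measurableSet_Ico fun x hx => ?_
    simp only [step, if_pos hx.2, one_mul]
  · refine setLIntegral_congr_fun measurableSet_Ico fun x hx => ?_
    simp only [step, if_neg hx.1.not_gt, ENNReal.ofReal_mul hb₀]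

lemma continuous_stepMoment (hb : |b| < 1) (n : ℕ) : Continuous (stepMoment n b) := by
  have hint := fun p q =>
    (continuous_geomMoment hb n).intervalIntegrable (μ := volume) p q
  have hsymm : stepMoment n b = fun γ =>
      (∫ x in (0 : ℝ)..γ, geomMoment n b x) + b * -∫ x in (1 : ℝ)..γ, geomMoment n b x :=
    funext fun γ => by rw [stepMoment, intervalIntegral.integral_symm 1]
  rw [hsymm]
  exact (intervalIntegral.continuous_primitive hint 0).add
    (continuous_const.mul (intervalIntegral.continuous_primitive hint 1).neg)

lemma stepMoment_pos (hb₀ : 0 < b) (hb₁ : b < 1) (n : ℕ) (hγ : 0 ≤ γ) :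
    0 < stepMoment n b γ := by
  have hint := fun p q => (continuous_geomMoment (abs_lt.2 ⟨by linarith, hb₁⟩)
    n).intervalIntegrable (μ := volume) p q
  have hleft : 0 ≤ ∫ x in (0 : ℝ)..γ, geomMoment n b x :=
    intervalIntegral.integral_nonneg hγ fun x hx => geomMoment_nonneg hb₀.le n hx.1
  have hwhole : 0 < ∫ x in (0 : ℝ)..1, geomMoment n b x :=
    intervalIntegral.intervalIntegral_pos_of_pos_on (hint 0 1)
      (fun x hx => geomMoment_pos hb₀.le hb₁ n hx.1) one_pos
  rw [← intervalIntegral.integral_add_adjacent_intervals (hint 0 γ) (hint γ 1)] at hwhole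
  rw [stepMoment]
  nlinarith [mul_pos hb₀ hwhole, mul_nonneg (sub_nonneg.2 hb₁.le) hleft]

lemma RayPrivate.exists_ofReal_mul_tsum_add_le (hb₀ : 0 < b) (hb₁ : b < 1) (hv : 0 ≤ v)
    {g : ℝ → ℝ} (hg₀ : ∀ r, 0 ≤ g r) (hg : RayPrivate b g) :
    ∃ β ∈ Set.Icc (0 : ℝ) 1, ∃ C, 0 ≤ C ∧ ∀ x ∈ Set.Ico (0 : ℝ) 1,
      ENNReal.ofReal v * ∑' k : ℕ, ENNReal.ofReal ((x + k) * g (x + k)) +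
          ENNReal.ofReal C * ENNReal.ofReal (step b β x * geomMoment 2 b x) ≤
        ∑' k : ℕ, ENNReal.ofReal ((x + k) ^ 2 * g (x + k)) +
          ENNReal.ofReal (C * v) * ENNReal.ofReal (step b β x * geomMoment 1 b x) := by
  obtain ⟨β, hβ, C, hC, hcomp⟩ := hg.exists_step_comparison hb₀ hb₁ hv hg₀
  refine ⟨β, hβ, C, hC, fun x hx => ?_⟩
  obtain ⟨G, hG, hpivot, hGD⟩ := hcomp x hx
  have hD := mul_nonneg hC (step_nonneg hb₀.le β x)
  convert ofReal_mul_tsum_add_le hb₀.le hb₁ hv hx.1 hg₀ hG hD hpivot hGD using 2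
  · rw [← ENNReal.ofReal_mul hC, mul_assoc]
  · rw [← ENNReal.ofReal_mul (mul_nonneg hC hv)]
    ring_nf

lemma RayPrivate.ofReal_mul_lintegral_le (hb₀ : 0 < b) (hb₁ : b < 1) (hv : 0 ≤ v)
    (hstep : ∀ γ ∈ Set.Icc (0 : ℝ) 1, v * stepMoment 1 b γ ≤ stepMoment 2 b γ) {g : ℝ → ℝ}
    (hgm : Measurable g) (hg₀ : ∀ r, 0 ≤ g r) (hg : RayPrivate b g) :
    ENNReal.ofReal v * ∫⁻ r in Set.Ici (0 : ℝ), ENNReal.ofReal (r * g r) ≤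
      ∫⁻ r in Set.Ici (0 : ℝ), ENNReal.ofReal (r ^ 2 * g r) := by
  obtain ⟨β, hβ, C, hC, hcomp⟩ := hg.exists_ofReal_mul_tsum_add_le hb₀ hb₁ hv hg₀
  have hmeas : ∀ n, Measurable fun x => ENNReal.ofReal (step b β x * geomMoment n b x) := fun n =>
    ((measurable_step b β).mul
      (continuous_geomMoment (abs_lt.2 ⟨by linarith, hb₁⟩) n).measurable).ennreal_ofReal
  have hfold := setLIntegral_mono' (μ := volume) measurableSet_Ico hcomp
  rw [lintegral_add_right _ ((hmeas 2).const_mul _), lintegral_add_right _ ((hmeas 1).const_mul _),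
    lintegral_const_mul _ (hmeas 2), lintegral_const_mul _ (hmeas 1),
    lintegral_const_mul' _ _ ENNReal.ofReal_ne_top,
    lintegral_ofReal_step_mul_geomMoment hb₀.le hb₁ 2 hβ,
    lintegral_ofReal_step_mul_geomMoment hb₀.le hb₁ 1 hβ] at hfold
  rw [lintegral_Ici_eq_lintegral_Ico_tsum (u := fun r => ENNReal.ofReal (r * g r)) (by fun_prop),
    lintegral_Ici_eq_lintegral_Ico_tsum (u := fun r => ENNReal.ofReal (r ^ 2 * g r))
      (by fun_prop)]
  have hle : ENNReal.ofReal (C * v) * ENNReal.ofReal (stepMoment 1 b β) ≤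
      ENNReal.ofReal C * ENNReal.ofReal (stepMoment 2 b β) := by
    rw [ENNReal.ofReal_mul hC, mul_assoc, ← ENNReal.ofReal_mul hv]
    gcongr
    exact hstep β hβ
  exact (ENNReal.add_le_add_iff_right (ENNReal.mul_ne_top ENNReal.ofReal_ne_top
    ENNReal.ofReal_ne_top)).1 (hfold.trans (by gcongr))

end StepMoments

section PolarCoordinates

lemma lintegral_eq_lintegral_toSphere_lintegral_Ioi {E : Type*} [NormedAddCommGroup E]
    [NormedSpace ℝ E] [FiniteDimensional ℝ E] [Nontrivial E] [MeasurableSpace E] [BorelSpace E]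
    (μ : Measure E) [μ.IsAddHaarMeasure] {F : E → ℝ≥0∞} (hF : Measurable F) :
    ∫⁻ x, F x ∂μ = ∫⁻ θ, (∫⁻ r in Set.Ioi (0 : ℝ),
      ENNReal.ofReal (r ^ (Module.finrank ℝ E - 1)) * F (r • (θ : E))) ∂μ.toSphere := by
  have hpolar : Measurable fun p : Metric.sphere (0 : E) 1 × Set.Ioi (0 : ℝ) =>
      F ((p.2 : ℝ) • (p.1 : E)) := by fun_prop
  calc ∫⁻ x, F x ∂μ = ∫⁻ x : ({0}ᶜ : Set E), F x ∂μ.comap (↑) := by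
        rw [lintegral_subtype_comap (measurableSet_singleton _).compl, restrict_compl_singleton]
    _ = ∫⁻ p, F ((p.2 : ℝ) • (p.1 : E))
          ∂μ.toSphere.prod (Measure.volumeIoiPow (Module.finrank ℝ E - 1)) := by
        rw [← μ.measurePreserving_homeomorphUnitSphereProd.lintegral_comp hpolar]
        refine lintegral_congr fun x => ?_
        rw [← homeomorphUnitSphereProd_symm_apply_coe, Homeomorph.symm_apply_apply]
    _ = _ := by
        rw [lintegral_prod _ hpolar.aemeasurable]
        refine lintegral_congr fun θ => ?_
        rw [Measure.volumeIoiPow, lintegral_withDensity_eq_lintegral_mul _ (by fun_prop)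
          (by fun_prop), ← lintegral_subtype_comap measurableSet_Ioi]
        rfl

lemma l1_nonneg (x : ℝ × ℝ) : 0 ≤ l1 x := add_nonneg (abs_nonneg _) (abs_nonneg _)

lemma l1_smul (r : ℝ) (x : ℝ × ℝ) : l1 (r • x) = |r| * l1 x := by
  simp [l1, abs_mul, mul_add]

lemma l1_add_le (x y : ℝ × ℝ) : l1 (x + y) ≤ l1 x + l1 y :=
  (add_le_add (abs_add_le _ _) (abs_add_le _ _)).trans_eq (add_add_add_comm _ _ _ _)

lemma continuous_l1 : Continuous l1 := by
  unfold l1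
  fun_prop

lemma measurable_l1 : Measurable l1 := continuous_l1.measurable

/-- The measure is the cone measure on the `ℓ¹` sphere of radius `Δ`. -/
lemma exists_l1_polar_measure {Δ : ℝ} (hΔ : 0 < Δ) :
    ∃ σ : Measure (ℝ × ℝ), IsFiniteMeasure σ ∧ σ ≠ 0 ∧ (∀ᵐ θ ∂σ, l1 θ = Δ) ∧
      ∀ F : ℝ × ℝ → ℝ≥0∞, Measurable F → ∫⁻ x, F x =
        ∫⁻ θ, (∫⁻ r in Set.Ici (0 : ℝ), ENNReal.ofReal r * F (r • θ)) ∂σ := by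
  let e : WithLp 1 (ℝ × ℝ) ≃L[ℝ] ℝ × ℝ := (WithLp.prodContinuousLinearEquiv 1 ℝ ℝ ℝ).trans
    (ContinuousLinearEquiv.smulLeft (Units.mk0 Δ hΔ.ne'))
  have he : ∀ x, l1 (e x) = Δ * ‖x‖ := fun x => by
    rw [WithLp.prod_norm_eq_of_L1, ← abs_of_pos hΔ]
    exact l1_smul Δ (WithLp.ofLp x)
  have hdim : Module.finrank ℝ (WithLp 1 (ℝ × ℝ)) = 2 := by
    rw [e.toLinearEquiv.finrank_eq]
    simp
  have hemb : Measurable fun θ : Metric.sphere (0 : WithLp 1 (ℝ × ℝ)) 1 => e θ :=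
    e.continuous.measurable.comp measurable_subtype_coe
  have : Nontrivial (WithLp 1 (ℝ × ℝ)) := e.toEquiv.nontrivial
  refine ⟨((volume.map e.symm).toSphere).map
    fun θ : Metric.sphere (0 : WithLp 1 (ℝ × ℝ)) 1 => e θ, inferInstance, ?_, ?_, ?_⟩
  · rw [Ne, Measure.map_eq_zero_iff hemb.aemeasurable]
    exact Measure.toSphere_ne_zero _
  · rw [ae_map_iff hemb.aemeasurable (measurableSet_eq_fun measurable_l1 measurable_const)]
    exact ae_of_all _ fun θ => by simp [he]
  · intro F hF
    have hFe : Measurable fun y => F (e y) := hF.comp e.continuous.measurable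
    have hmap : ∫⁻ x, F x = ∫⁻ y, F (e y) ∂volume.map e.symm := by
      rw [lintegral_map hFe e.symm.continuous.measurable]
      simp
    rw [hmap, lintegral_eq_lintegral_toSphere_lintegral_Ioi _ hFe,
      lintegral_map (by fun_prop) hemb]
    simp [hdim, restrict_Ioi_eq_restrict_Ici]

lemma exists_lintegral_comp_l1_eq_mul {Δ : ℝ} (hΔ : 0 < Δ) :
    ∃ c : ℝ≥0∞, c ≠ 0 ∧ c ≠ ∞ ∧ ∀ φ : ℝ → ℝ≥0∞, Measurable φ →
      ∫⁻ x, φ (l1 x) = c * ∫⁻ r in Set.Ici (0 : ℝ), ENNReal.ofReal r * φ (r * Δ) := by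
  obtain ⟨σ, hfin, hne, hσ, hpolar⟩ := exists_l1_polar_measure hΔ
  refine ⟨σ Set.univ, by simpa using hne, measure_ne_top σ _, fun φ hφ => ?_⟩
  rw [hpolar (fun x => φ (l1 x)) (hφ.comp measurable_l1), mul_comm, ← lintegral_const]
  refine lintegral_congr_ae (hσ.mono fun θ hθ => ?_)
  refine setLIntegral_congr_fun measurableSet_Ici fun r hr => ?_
  simp only [l1_smul, hθ, abs_of_nonneg (Set.mem_Ici.1 hr)]

end PolarCoordinates

section Staircase

variable {b ε Δ : ℝ} {i k : ℕ}

/-- The unnormalised density sequence of the staircase density on layers of width `Δ / i`: it is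
`bᵐ` until the `k`-th layer of the `m`-th period and drops to `bᵐ⁺¹` there. -/
def stairSeq (b : ℝ) (i k j : ℕ) : ℝ≥0∞ := ENNReal.ofReal (b ^ ((j + (i - k)) / i))

lemma antitone_stairSeq (hb₀ : 0 ≤ b) (hb₁ : b ≤ 1) (i k : ℕ) : Antitone (stairSeq b i k) :=
  fun _ _ hmn => ENNReal.ofReal_le_ofReal <| pow_le_pow_of_le_one hb₀ hb₁ <|
    Nat.div_le_div_right (Nat.add_le_add_right hmn _)

lemma stairSeq_add_mul (hb : 0 ≤ b) (hi : 0 < i) (j m : ℕ) :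
    stairSeq b i k (j + m * i) = ENNReal.ofReal (b ^ m) * stairSeq b i k j := by
  rw [stairSeq, stairSeq, add_right_comm, Nat.add_mul_div_right _ _ hi, pow_add, mul_comm,
    ENNReal.ofReal_mul (pow_nonneg hb m)]

lemma stairSeq_of_lt {j : ℕ} (hj : j < k) (hk : k ≤ i) : stairSeq b i k j = 1 := by
  rw [stairSeq, Nat.div_eq_of_lt (by lia), pow_zero, ENNReal.ofReal_one]

lemma stairSeq_of_le {j : ℕ} (hk : k ≤ j) (hj : j < i) :
    stairSeq b i k j = ENNReal.ofReal b := by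
  rw [stairSeq, show j + (i - k) = j - k + i by lia, Nat.add_div_right _ (by lia),
    Nat.div_eq_of_lt (by lia), zero_add, pow_one]

lemma stairSeq_floor (hb : 0 ≤ b) (hi : 0 < i) (hk : k ≤ i) {x : ℝ} (hx : x ∈ Set.Ico 0 1)
    (m : ℕ) : stairSeq b i k ⌊(x + m) * i⌋₊ = ENNReal.ofReal (b ^ m * step b (k / i) x) := by
  have hi' : (0 : ℝ) < i := Nat.cast_pos.2 hi
  have hxi : 0 ≤ x * i := mul_nonneg hx.1 hi'.le
  have hfloor : ⌊(x + m) * i⌋₊ = ⌊x * i⌋₊ + m * i := by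
    rw [add_mul, ← Nat.cast_mul, Nat.floor_add_natCast hxi]
  have hlt : ⌊x * i⌋₊ < i := (Nat.floor_lt hxi).2 (mul_lt_of_lt_one_left hi' hx.2)
  have hswitch : ⌊x * i⌋₊ < k ↔ x < k / i := by rw [Nat.floor_lt hxi, lt_div_iff₀ hi']
  rw [hfloor, stairSeq_add_mul hb hi, ENNReal.ofReal_mul (pow_nonneg hb m)]
  congr 1
  by_cases h : x < k / i
  · rw [stairSeq_of_lt (hswitch.2 h) hk, step, if_pos h, ENNReal.ofReal_one]
  · rw [stairSeq_of_le (not_lt.1 (mt hswitch.1 h)) hlt, step, if_neg h]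

lemma lintegral_pow_mul_stairSeq (hb₀ : 0 ≤ b) (hb₁ : b < 1) (hi : 0 < i) (hk : k ≤ i) (n : ℕ) :
    ∫⁻ r in Set.Ici (0 : ℝ), ENNReal.ofReal (r ^ n) * stairSeq b i k ⌊r * i⌋₊ =
      ENNReal.ofReal (stepMoment n b (k / i)) := by
  have hγ : (k / i : ℝ) ∈ Set.Icc 0 1 :=
    ⟨by positivity, div_le_one_of_le₀ (Nat.cast_le.2 hk) i.cast_nonneg⟩
  have hmeas : Measurable fun r : ℝ => stairSeq b i k ⌊r * i⌋₊ := by fun_prop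
  rw [lintegral_Ici_eq_lintegral_Ico_tsum (by fun_prop),
    ← lintegral_ofReal_step_mul_geomMoment hb₀ hb₁ n hγ]
  refine setLIntegral_congr_fun measurableSet_Ico fun x hx => ?_
  have hx₀ := hx.1
  rw [ofReal_mul_geomMoment hb₀ hb₁ n hx.1 (step_nonneg hb₀ _ _)]
  refine tsum_congr fun m => ?_
  rw [stairSeq_floor hb₀ hi hk hx, ← ENNReal.ofReal_mul (by positivity)]
  ring_nf

lemma measurable_layerIdx (Δ : ℝ) (i : ℕ) : Measurable (layerIdx Δ i) :=
  Nat.measurable_floor.comp ((measurable_l1.mul_const _).div_const _)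

lemma layerIdx_add_le (hΔ : 0 < Δ) (i : ℕ) (x : ℝ × ℝ) {t : ℝ × ℝ} (ht : l1 t ≤ Δ) :
    layerIdx Δ i (x + t) ≤ layerIdx Δ i x + i := by
  have hx : 0 ≤ l1 x * i / Δ := div_nonneg (mul_nonneg (l1_nonneg x) i.cast_nonneg) hΔ.le
  rw [layerIdx, layerIdx, ← Nat.floor_add_natCast hx, div_add' _ _ _ hΔ.ne', ← mul_comm Δ,
    ← add_mul]
  gcongr
  exact (l1_add_le x t).trans (add_le_add_right ht _)

lemma DPC_withDensity_layerIdx (hΔ : 0 < Δ) {a : ℕ → ℝ≥0∞} (ha : Antitone a)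
    (hperiod : ∀ j, a j = ENNReal.ofReal (exp ε) * a (j + i)) :
    DPC ε Δ (volume.withDensity fun x => a (layerIdx Δ i x)) := by
  intro S hS t ht
  have hmeas : Measurable fun x => a (layerIdx Δ i x) :=
    measurable_from_nat.comp (measurable_layerIdx Δ i)
  have hSt : MeasurableSet ((· + t) '' S) :=
    (Homeomorph.addRight t).measurableEmbedding.measurableSet_image.2 hS
  rw [withDensity_apply _ hS, withDensity_apply _ hSt,
    ← (measurePreserving_add_right volume t).setLIntegral_comp_preimage hSt hmeas,
    Set.preimage_image_eq _ (add_left_injective t),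
    ← lintegral_const_mul' _ _ ENNReal.ofReal_ne_top]
  refine lintegral_mono fun x => ?_
  dsimp only
  rw [hperiod]
  gcongr
  exact ha (layerIdx_add_le hΔ i x ht)

lemma ofReal_exp_mul_ofReal_exp_neg (ε : ℝ) :
    ENNReal.ofReal (exp ε) * ENNReal.ofReal (exp (-ε)) = 1 := by
  rw [← ENNReal.ofReal_mul (exp_pos _).le, ← exp_add, add_neg_cancel, exp_zero,
    ENNReal.ofReal_one]

lemma stairSeq_eq_exp_mul_add (hi : 0 < i) (j : ℕ) :
    stairSeq (exp (-ε)) i k j = ENNReal.ofReal (exp ε) * stairSeq (exp (-ε)) i k (j + i) := by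
  have h := stairSeq_add_mul (k := k) (exp_pos (-ε)).le hi j 1
  rw [one_mul, pow_one] at h
  rw [h, ← mul_assoc, ofReal_exp_mul_ofReal_exp_neg, one_mul]

lemma memPd_withDensity_stairSeq (hε : 0 < ε) (hΔ : 0 < Δ) (hk : 1 ≤ k) (hki : k ≤ i - 2)
    {c : ℝ≥0∞} (hprob : IsProbabilityMeasure
      (volume.withDensity fun x => c * stairSeq (exp (-ε)) i k (layerIdx Δ i x))) :
    MemPd ε Δ i (volume.withDensity fun x => c * stairSeq (exp (-ε)) i k (layerIdx Δ i x)) := by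
  let a := fun j => c * stairSeq (exp (-ε)) i k j
  have hlast : stairSeq (exp (-ε)) i k (i - 1) = ENNReal.ofReal (exp (-ε)) :=
    stairSeq_of_le (by lia) (by lia)
  have hzero : stairSeq (exp (-ε)) i k 0 = 1 := stairSeq_of_lt hk (by lia)
  have hanti : Antitone a := Antitone.const_mul'
    (antitone_stairSeq (exp_pos _).le (exp_le_one_iff.2 (by linarith)) i k) c
  have hperiod : ∀ j, a j = ENNReal.ofReal (exp ε) * a (j + i) := fun j => by
    simp only [a]
    rw [mul_left_comm, ← stairSeq_eq_exp_mul_add (by lia)]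
  refine ⟨⟨hprob, DPC_withDensity_layerIdx (a := a) hΔ hanti hperiod⟩, a, rfl, hanti, hperiod,
    ?_, ⟨0, Nat.zero_le _, fun j hj => ?_⟩, k, hk, hki, fun j hj => ?_, fun j hj hji => ?_⟩
  · simp only [a]
    rw [hlast, hzero, mul_left_comm, ofReal_exp_mul_ofReal_exp_neg]
  · rw [Nat.le_zero.1 hj]
  · simp only [a]
    rw [stairSeq_of_lt hj (by lia), hzero]
  · simp only [a]
    rw [stairSeq_of_le hj.le (by lia), hlast]

lemma exists_lintegral_l1_pow_mul_stairSeq (hΔ : 0 < Δ) (hb₀ : 0 ≤ b) (hb₁ : b < 1) (hi : 0 < i)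
    (hk : k ≤ i) : ∃ c : ℝ≥0∞, c ≠ 0 ∧ c ≠ ∞ ∧ ∀ n : ℕ,
      ∫⁻ x, ENNReal.ofReal (l1 x ^ n) * stairSeq b i k (layerIdx Δ i x) =
        c * ENNReal.ofReal (Δ ^ n * stepMoment (n + 1) b (k / i)) := by
  obtain ⟨c, hc₀, hc, hpolar⟩ := exists_lintegral_comp_l1_eq_mul hΔ
  refine ⟨c, hc₀, hc, fun n => ?_⟩
  have hmeas : Measurable fun s : ℝ => stairSeq b i k ⌊s * i / Δ⌋₊ := by fun_prop
  rw [ENNReal.ofReal_mul (by positivity), ← lintegral_pow_mul_stairSeq hb₀ hb₁ hi hk,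
    ← lintegral_const_mul' _ _ ENNReal.ofReal_ne_top]
  refine (hpolar (fun s => ENNReal.ofReal (s ^ n) * stairSeq b i k ⌊s * i / Δ⌋₊)
    (by fun_prop)).trans (congrArg (c * ·) ?_)
  refine setLIntegral_congr_fun measurableSet_Ici fun r hr => ?_
  have hr₀ : 0 ≤ r := hr
  have hscale : r * Δ * i / Δ = r * i := by field_simp
  simp only [hscale]
  rw [← mul_assoc, ← mul_assoc, ← ENNReal.ofReal_mul hr₀, ← ENNReal.ofReal_mul (by positivity)]
  ring_nf

lemma exists_memPd_cost_eq (hε : 0 < ε) (hΔ : 0 < Δ) (hk : 1 ≤ k) (hki : k ≤ i - 2) :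
    ∃ μ, MemPd ε Δ i μ ∧ cost μ = ENNReal.ofReal
      (Δ * stepMoment 2 (exp (-ε)) (k / i) / stepMoment 1 (exp (-ε)) (k / i)) := by
  have hb₁ : exp (-ε) < 1 := by simpa using hε
  obtain ⟨c, hc₀, hc, hmoment⟩ := exists_lintegral_l1_pow_mul_stairSeq (i := i) (k := k) hΔ
    (exp_pos (-ε)).le hb₁ (by lia) (by lia)
  set a := fun x => stairSeq (exp (-ε)) i k (layerIdx Δ i x)
  have ha_meas : Measurable a :=
    (measurable_from_nat (f := stairSeq _ i k)).comp (measurable_layerIdx Δ i)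
  have hm₁ : 0 < stepMoment 1 (exp (-ε)) (k / i) :=
    stepMoment_pos (exp_pos _) hb₁ 1 (by positivity)
  set M := c * ENNReal.ofReal (stepMoment 1 (exp (-ε)) (k / i))
  have hM₀ : M ≠ 0 := mul_ne_zero hc₀ (ENNReal.ofReal_pos.2 hm₁).ne'
  have hM : M ≠ ∞ := ENNReal.mul_ne_top hc ENNReal.ofReal_ne_top
  have hmass : ∫⁻ x, a x = M := by simpa using hmoment 0
  have hprob : IsProbabilityMeasure (volume.withDensity fun x => M⁻¹ * a x) := by
    refine ⟨?_⟩
    rw [withDensity_apply _ .univ, Measure.restrict_univ, lintegral_const_mul _ ha_meas, hmass,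
      ENNReal.inv_mul_cancel hM₀ hM]
  refine ⟨_, memPd_withDensity_stairSeq hε hΔ hk hki hprob, ?_⟩
  have hfirst : ∫⁻ x, ENNReal.ofReal (l1 x) * a x =
      c * ENNReal.ofReal (Δ * stepMoment 2 (exp (-ε)) (k / i)) := by simpa using hmoment 1
  calc cost _ = ∫⁻ x, M⁻¹ * (ENNReal.ofReal (l1 x) * a x) := by
        rw [cost, lintegral_withDensity_eq_lintegral_mul _ (ha_meas.const_mul _)
          measurable_l1.ennreal_ofReal]
        simp only [Pi.mul_apply, mul_assoc, mul_comm (a _)]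
    _ = c * ENNReal.ofReal (Δ * stepMoment 2 (exp (-ε)) (k / i)) / M := by
        rw [lintegral_const_mul' _ _ (ENNReal.inv_ne_top.2 hM₀), hfirst,
          mul_comm, ← div_eq_mul_inv]
    _ = _ := by
        rw [ENNReal.mul_div_mul_left _ _ hc₀ hc, ENNReal.ofReal_div_of_pos hm₁]

lemma exists_staircase_switch {q : ℚ} (hq : q ∈ Set.Ioo 0 1) :
    ∃ i k : ℕ, 1 ≤ k ∧ k ≤ i - 2 ∧ (k / i : ℝ) = q := by
  have hnum : 0 < q.num := Rat.num_pos.2 hq.1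
  have hlt : q.num < q.den := Rat.num_lt_denom_iff.2 hq.2
  refine ⟨3 * q.den, 3 * q.num.toNat, by lia, by lia, ?_⟩
  have hcast : (q.num.toNat : ℝ) = q.num := by exact_mod_cast Int.toNat_of_nonneg hnum.le
  rw [Nat.cast_mul, Nat.cast_mul, hcast, mul_div_mul_left _ _ (by norm_num), Rat.cast_def]

lemma mul_stepMoment_one_le_stepMoment_two {V : ℝ} (hε : 0 < ε) (hΔ : 0 < Δ)
    (hopt : ∀ i μ, 3 ≤ i → MemPd ε Δ i μ → ENNReal.ofReal V ≤ cost μ)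
    {γ : ℝ} (hγ : γ ∈ Set.Icc 0 1) :
    V / Δ * stepMoment 1 (exp (-ε)) γ ≤ stepMoment 2 (exp (-ε)) γ := by
  have hb₁ : exp (-ε) < 1 := by simpa using hε
  have hb : |exp (-ε)| < 1 := by rwa [abs_of_pos (exp_pos _)]
  have hclosed : IsClosed {γ | V / Δ * stepMoment 1 (exp (-ε)) γ ≤ stepMoment 2 (exp (-ε)) γ} :=
    isClosed_le (continuous_const.mul (continuous_stepMoment hb 1)) (continuous_stepMoment hb 2)
  have hrat : Set.Ioo (0 : ℝ) 1 ∩ Set.range ((↑) : ℚ → ℝ) ⊆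
      {γ | V / Δ * stepMoment 1 (exp (-ε)) γ ≤ stepMoment 2 (exp (-ε)) γ} := by
    rintro _ ⟨hq, q, rfl⟩
    obtain ⟨i, k, hk, hki, hkq⟩ :=
      exists_staircase_switch (q := q) ⟨mod_cast hq.1, mod_cast hq.2⟩
    obtain ⟨μ, hμ, hcost⟩ := exists_memPd_cost_eq hε hΔ hk hki
    have hm₁ : 0 < stepMoment 1 (exp (-ε)) q := stepMoment_pos (exp_pos _) hb₁ 1 hq.1.le
    have hm₂ : 0 < stepMoment 2 (exp (-ε)) q := stepMoment_pos (exp_pos _) hb₁ 2 hq.1.le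
    have hle := hopt i μ (by lia) hμ
    rw [hcost, hkq, ENNReal.ofReal_le_ofReal_iff (by positivity), mul_div_assoc, ← div_le_iff₀' hΔ,
      le_div_iff₀ hm₁] at hle
    exact hle
  rw [← closure_Ioo zero_ne_one] at hγ
  exact closure_minimal hrat hclosed <| closure_minimal
    (Rat.denseRange_cast.open_subset_closure_inter isOpen_Ioo) isClosed_closure hγ

end Staircase

section PointwiseDP

variable {ε Δ V : ℝ} {f : ℝ × ℝ → ℝ}

/-- The pointwise form of the differential privacy constraint, for a density on the plane. -/
def PointwiseDP (ε Δ : ℝ) (f : ℝ × ℝ → ℝ) : Prop :=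
  ∀ x t, l1 t ≤ Δ → f x ≤ exp ε * f (x + t)

lemma PointwiseDP.rayPrivate (hf : PointwiseDP ε Δ f) (hΔ : 0 ≤ Δ)
    {θ : ℝ × ℝ} (hθ : l1 θ = Δ) : RayPrivate (exp (-ε)) fun r => f (r • θ) := by
  intro r s hrs
  have hmove : l1 ((s - r) • θ) ≤ Δ := by
    rw [l1_smul, hθ, abs_sub_comm]
    exact mul_le_of_le_one_left hΔ hrs
  have h := hf (r • θ) _ hmove
  rw [← add_smul, add_sub_cancel] at h
  rwa [exp_neg, inv_mul_le_iff₀ (exp_pos ε)]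

lemma PointwiseDP.ofReal_mul_lintegral_le (hf : PointwiseDP ε Δ f)
    (hf_meas : Measurable f) (hf₀ : ∀ x, 0 ≤ f x) (hε : 0 < ε) (hΔ : 0 < Δ) (hV : 0 ≤ V)
    (hstep : ∀ γ ∈ Set.Icc (0 : ℝ) 1,
      V / Δ * stepMoment 1 (exp (-ε)) γ ≤ stepMoment 2 (exp (-ε)) γ) :
    ENNReal.ofReal V * ∫⁻ x, ENNReal.ofReal (f x) ≤
      ∫⁻ x, ENNReal.ofReal (l1 x) * ENNReal.ofReal (f x) := by
  have hl1 := measurable_l1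
  obtain ⟨σ, -, -, hσ, hpolar⟩ := exists_l1_polar_measure hΔ
  rw [hpolar _ (by fun_prop), hpolar _ (by fun_prop),
    ← lintegral_const_mul' _ _ ENNReal.ofReal_ne_top]
  refine lintegral_mono_ae (hσ.mono fun θ hθ => ?_)
  have hray := RayPrivate.ofReal_mul_lintegral_le (exp_pos (-ε)) (by simpa using hε)
    (div_nonneg hV hΔ.le) hstep (by fun_prop) (fun r => hf₀ (r • θ)) (hf.rayPrivate hΔ.le hθ)
  calc ENNReal.ofReal V * ∫⁻ r in Set.Ici (0 : ℝ), ENNReal.ofReal r * ENNReal.ofReal (f (r • θ))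
      = ENNReal.ofReal Δ * (ENNReal.ofReal (V / Δ) *
          ∫⁻ r in Set.Ici (0 : ℝ), ENNReal.ofReal (r * f (r • θ))) := by
        rw [← mul_assoc, ← ENNReal.ofReal_mul hΔ.le, mul_div_cancel₀ _ hΔ.ne']
        congr 1
        exact setLIntegral_congr_fun measurableSet_Ici fun r hr => (ENNReal.ofReal_mul hr).symm
    _ ≤ ENNReal.ofReal Δ * ∫⁻ r in Set.Ici (0 : ℝ), ENNReal.ofReal (r ^ 2 * f (r • θ)) := by
        gcongr
    _ = _ := by
        rw [← lintegral_const_mul' _ _ ENNReal.ofReal_ne_top]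
        refine setLIntegral_congr_fun measurableSet_Ici fun r hr => ?_
        have hr₀ : 0 ≤ r := hr
        simp only [l1_smul, hθ, abs_of_nonneg hr₀]
        rw [← ENNReal.ofReal_mul hΔ.le, ← ENNReal.ofReal_mul (by positivity),
          ← ENNReal.ofReal_mul hr₀]
        ring_nf

end PointwiseDP

section Mollification

variable {ε Δ V δ : ℝ}

lemma lintegral_mul_measure_closedBall {X : Type*} [PseudoMetricSpace X] [MeasurableSpace X]
    [BorelSpace X] [SecondCountableTopology X] (μ ν : Measure X) [SFinite μ] [SFinite ν]
    (δ : ℝ) {u : X → ℝ≥0∞} (hu : Measurable u) :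
    ∫⁻ x, u x * μ (Metric.closedBall x δ) ∂ν =
      ∫⁻ y, (∫⁻ x in Metric.closedBall y δ, u x ∂ν) ∂μ := by
  have hclose : MeasurableSet {p : X × X | dist p.2 p.1 ≤ δ} :=
    measurableSet_le (by fun_prop) measurable_const
  have hind : Measurable ({p : X × X | dist p.2 p.1 ≤ δ}.indicator fun p => u p.1) :=
    (hu.comp measurable_fst).indicator hclose
  calc ∫⁻ x, u x * μ (Metric.closedBall x δ) ∂ν
      = ∫⁻ x, ∫⁻ y, {p : X × X | dist p.2 p.1 ≤ δ}.indicator (fun p => u p.1) (x, y) ∂μ ∂ν :=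
        lintegral_congr fun x =>
          (lintegral_indicator_const Metric.isClosed_closedBall.measurableSet (u x)).symm
    _ = ∫⁻ y, ∫⁻ x, {p : X × X | dist p.2 p.1 ≤ δ}.indicator (fun p => u p.1) (x, y) ∂ν ∂μ :=
        lintegral_lintegral_swap hind.aemeasurable
    _ = _ := by
        refine lintegral_congr fun y => ?_
        rw [← lintegral_indicator Metric.isClosed_closedBall.measurableSet]
        exact lintegral_congr fun x => Set.indicator_eq_indicator Metric.mem_closedBall'.symm rfl

lemma measurable_measure_closedBall {X : Type*} [PseudoMetricSpace X] [MeasurableSpace X]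
    [BorelSpace X] [SecondCountableTopology X] (μ : Measure X) [SFinite μ] (δ : ℝ) :
    Measurable fun x => μ (Metric.closedBall x δ) :=
  measurable_measure_prodMk_left (ν := μ) (s := {p : X × X | dist p.2 p.1 ≤ δ})
    (measurableSet_le (by fun_prop) measurable_const)

lemma DPC.pointwiseDP_real_closedBall {μ : Measure (ℝ × ℝ)} [IsFiniteMeasure μ]
    (hμ : DPC ε Δ μ) (δ : ℝ) : PointwiseDP ε Δ fun x => μ.real (Metric.closedBall x δ) := by
  intro x t ht
  have himage : (· + t) '' Metric.closedBall x δ = Metric.closedBall (x + t) δ := by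
    simp
  have h := hμ (Metric.closedBall x δ) Metric.isClosed_closedBall.measurableSet t ht
  rw [himage] at h
  have hreal := ENNReal.toReal_mono
    (ENNReal.mul_ne_top ENNReal.ofReal_ne_top (measure_ne_top _ _)) h
  rwa [ENNReal.toReal_mul, ENNReal.toReal_ofReal (exp_pos _).le] at hreal

lemma l1_le_two_mul_norm (x : ℝ × ℝ) : l1 x ≤ 2 * ‖x‖ := by
  rw [two_mul]
  exact add_le_add (norm_fst_le x) (norm_snd_le x)

lemma setLIntegral_l1_closedBall_le (hδ : 0 ≤ δ) (y : ℝ × ℝ) :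
    ∫⁻ x in Metric.closedBall y δ, ENNReal.ofReal (l1 x) ≤
      (ENNReal.ofReal (l1 y) + ENNReal.ofReal (2 * δ)) *
        volume (Metric.closedBall (0 : ℝ × ℝ) δ) := by
  rw [← Measure.addHaar_closedBall_center volume y δ, ← setLIntegral_const]
  refine setLIntegral_mono measurable_const fun x hx => ?_
  rw [← ENNReal.ofReal_add (l1_nonneg y) (by positivity)]
  refine ENNReal.ofReal_le_ofReal ?_
  calc l1 x = l1 (y + (x - y)) := by rw [add_sub_cancel]
    _ ≤ l1 y + 2 * ‖x - y‖ := (l1_add_le _ _).trans (by gcongr; exact l1_le_two_mul_norm _)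
    _ ≤ l1 y + 2 * δ := by gcongr; exact mem_closedBall_iff_norm.1 hx

lemma lintegral_l1_mul_measure_closedBall_le (μ : Measure (ℝ × ℝ)) [IsProbabilityMeasure μ]
    (hδ : 0 ≤ δ) :
    ∫⁻ x, ENNReal.ofReal (l1 x) * μ (Metric.closedBall x δ) ≤
      (cost μ + ENNReal.ofReal (2 * δ)) * volume (Metric.closedBall (0 : ℝ × ℝ) δ) := by
  have hvol : volume (Metric.closedBall (0 : ℝ × ℝ) δ) ≠ ∞ :=
    (isCompact_closedBall _ _).measure_ne_top
  rw [lintegral_mul_measure_closedBall μ _ δ measurable_l1.ennreal_ofReal]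
  refine (lintegral_mono (setLIntegral_l1_closedBall_le hδ)).trans_eq ?_
  rw [lintegral_mul_const' _ _ hvol, lintegral_add_right _ measurable_const, lintegral_const,
    measure_univ, mul_one, cost]

lemma ofReal_le_cost_of_memP (hε : 0 < ε) (hΔ : 0 < Δ) (hV : 0 ≤ V)
    (hstep : ∀ γ ∈ Set.Icc (0 : ℝ) 1,
      V / Δ * stepMoment 1 (exp (-ε)) γ ≤ stepMoment 2 (exp (-ε)) γ)
    {μ : Measure (ℝ × ℝ)} (hμ : MemP ε Δ μ) : ENNReal.ofReal V ≤ cost μ := by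
  obtain ⟨hprob, hdp⟩ := hμ
  refine ENNReal.le_of_forall_pos_le_add fun η hη _ => ?_
  have hδ : (0 : ℝ) < η / 2 := half_pos hη
  set δ : ℝ := η / 2
  set vol := volume (Metric.closedBall (0 : ℝ × ℝ) δ)
  have hvol₀ : vol ≠ 0 := (Metric.measure_closedBall_pos volume _ hδ).ne'
  have hvol : vol ≠ ∞ := (isCompact_closedBall _ _).measure_ne_top
  have hmass : ∫⁻ x, μ (Metric.closedBall x δ) = vol := by
    simpa [Measure.addHaar_closedBall_center] using
      lintegral_mul_measure_closedBall μ volume δ (measurable_const (a := 1))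
  have hreal : ∀ x, ENNReal.ofReal (μ.real (Metric.closedBall x δ)) =
      μ (Metric.closedBall x δ) := fun x => ofReal_measureReal
  have hplane := (hdp.pointwiseDP_real_closedBall δ).ofReal_mul_lintegral_le
    (measurable_measure_closedBall μ δ).ennreal_toReal (fun _ => measureReal_nonneg) hε hΔ hV hstep
  simp only [hreal, hmass] at hplane
  have hcost := hplane.trans (lintegral_l1_mul_measure_closedBall_le μ hδ.le)
  rw [mul_div_cancel₀ _ two_ne_zero, ENNReal.ofReal_coe_nnreal] at hcost
  exact (ENNReal.mul_le_mul_iff_left hvol₀ hvol).1 hcost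

end Mollification

/-- Lemma 9: the optimal cost V* equals the infimum over measures in 𝒫_i^{(d)},
i ≥ 3: two-valued staircase-shaped density sequences on each period. -/
theorem Vstar_eq_inf_Pd (ε Δ : ℝ) (hε : 0 < ε) (hΔ : 0 < Δ) :
    (⨅ (μ : Measure (ℝ × ℝ)) (_ : MemP ε Δ μ), cost μ) =
    ⨅ (μ : Measure (ℝ × ℝ)) (_ : ∃ i : ℕ, 3 ≤ i ∧ MemPd ε Δ i μ), cost μ := by
  refine le_antisymm (le_iInf₂ fun μ ⟨_, _, hμ⟩ => iInf₂_le μ hμ.1) ?_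
  refine ENNReal.le_of_forall_nnreal_lt fun V hV => le_iInf₂ fun μ hμ => ?_
  rw [← ENNReal.ofReal_coe_nnreal] at hV ⊢
  refine ofReal_le_cost_of_memP hε hΔ V.2 (fun γ hγ => ?_) hμ
  exact mul_stepMoment_one_le_stepMoment_two hε hΔ
    (fun i ν hi hν => hV.le.trans (iInf₂_le ν ⟨i, hi, hν⟩)) hγ
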